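/- arXiv:math/9712269 — 4 statements merged into one kernel-verified Lean document; each statement's English description precedes it below -/
import Mathlib

section
/- Let m, n be natural numbers and let A be an m×n integer matrix. Then the set of fundamental solutions of the system Ax = 0 (i.e., the set of nonzero vectors x : Fin n → ℕ satisfying ∑_j A i j · x j = 0 for every i that cannot be written as x = y + z for two nonzero vectors y, z : Fin n → ℕ each satisfying the same equations) is finite. -/
/-- `x : Fin n → ℕ` is a solution of the normal surface equations `A x = 0`. -/
def IsSolution {m n : ℕ} (A : Matrix (Fin m) (Fin n) ℤ) (x : Fin n → ℕ) : Prop :=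
  ∀ i : Fin m, ∑ j : Fin n, A i j * (x j : ℤ) = 0

/-- A solution is fundamental if it is nonzero and cannot be written as the sum of
two nonzero solutions. -/
def IsFundamental {m n : ℕ} (A : Matrix (Fin m) (Fin n) ℤ) (x : Fin n → ℕ) : Prop :=
  IsSolution A x ∧ x ≠ 0 ∧
    ¬ ∃ y z : Fin n → ℕ, y ≠ 0 ∧ z ≠ 0 ∧ IsSolution A y ∧ IsSolution A z ∧ x = y + z

/-- A solution lying below another one leaves a solution as the difference, by linearity. -/
lemma IsSolution.sub {m n : ℕ} {A : Matrix (Fin m) (Fin n) ℤ} {x y : Fin n → ℕ}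
    (hx : IsSolution A x) (hy : IsSolution A y) (hle : x ≤ y) : IsSolution A (y - x) := by
  intro i
  have hcast : ∀ j, (((y - x) j : ℕ) : ℤ) = (y j : ℤ) - (x j : ℤ) := fun j => Nat.cast_sub (hle j)
  simp only [hcast, mul_sub, Finset.sum_sub_distrib, hx i, hy i, sub_zero]

/-- The set of fundamental solutions of the normal surface equations is finite. -/
theorem fundamental_solutions_finite (m n : ℕ) (A : Matrix (Fin m) (Fin n) ℤ) :
    {x : Fin n → ℕ | IsFundamental A x}.Finite := by
  -- Fundamental solutions form an antichain for the coordinatewise order: if `x < y` were both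
  -- fundamental, then `y = x + (y - x)` would decompose `y`. By Dickson's lemma, antichains
  -- in `Fin n → ℕ` are finite.
  refine WellQuasiOrderedLE.finite_of_isAntichain ?_
  rintro x ⟨hx, hx0, -⟩ y ⟨hy, -, hirr⟩ hne hle
  refine hirr ⟨x, y - x, hx0, fun h => hne ?_, hx, hx.sub hy hle, (add_tsub_cancel_of_le hle).symm⟩
  exact le_antisymm hle (tsub_eq_zero_iff_le.mp h)
end

section
/- Let m, n be natural numbers and let A be an m×n integer matrix. Then there exist a natural number k and vectors V 1, …, V k : Fin n → ℕ, each of which is a solution (∑_j A i j · (V l) j = 0 for every i), such that for every x : Fin n → ℝ with x i ≥ 0 for all i and ∑_j A i j · x j = 0 for every i, there exist real coefficients t 1, …, t k ≥ 0 with x i = ∑_l t l · (V l) i for every i. -/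
/-- The vectors `V` solve the equations of `A` with index in `s`, and they generate the cone of
nonnegative real solutions of these equations. -/
def Generates {m n : ℕ} (A : Matrix (Fin m) (Fin n) ℤ) (s : Finset (Fin m)) {ι : Type}
    [Fintype ι] (V : ι → Fin n → ℕ) : Prop :=
  (∀ l, ∀ i ∈ s, ∑ j, A i j * (V l j : ℤ) = 0) ∧
    ∀ x : Fin n → ℝ, (∀ i, 0 ≤ x i) → (∀ i ∈ s, ∑ j, (A i j : ℝ) * x j = 0) →
      ∃ t : ι → ℝ, (∀ l, 0 ≤ t l) ∧ ∀ i, x i = ∑ l, t l * (V l i : ℝ)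

/-- The generators after imposing one more equation, whose linear form takes the value `f i` at
`V i`. Indices that do not yield a generator give the zero vector. -/
def newGen {n : ℕ} {ι : Type} (V : ι → Fin n → ℕ) (f : ι → ℤ) : ι ⊕ ι × ι → Fin n → ℕ
  | .inl i => fun j => if f i = 0 then V i j else 0
  | .inr (p, q) => fun j =>
      if 0 < f p ∧ f q < 0 then (f p).toNat * V q j + (-f q).toNat * V p j else 0

/-- Any linear equation satisfied by all generators with `f i = 0` and by the combinations
`f p • V q - f q • V p` is satisfied by all new generators. -/
lemma newGen_solution {n : ℕ} {ι : Type} (V : ι → Fin n → ℕ) (f : ι → ℤ) (a : Fin n → ℤ)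
    (h0 : ∀ i, f i = 0 → ∑ j, a j * (V i j : ℤ) = 0)
    (h1 : ∀ p q, f p * ∑ j, a j * (V q j : ℤ) - f q * ∑ j, a j * (V p j : ℤ) = 0)
    (l : ι ⊕ ι × ι) : ∑ j, a j * (newGen V f l j : ℤ) = 0 := by
  rcases l with i | ⟨p, q⟩
  · by_cases h : f i = 0
    · simpa [newGen, h] using h0 i h
    · simp [newGen, h]
  · by_cases h : 0 < f p ∧ f q < 0
    · have e1 : ((f p).toNat : ℤ) = f p := Int.toNat_of_nonneg h.1.le
      have e2 : ((-f q).toNat : ℤ) = -f q := Int.toNat_of_nonneg (by linarith [h.2])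
      rw [← h1 p q, Finset.mul_sum, Finset.mul_sum, ← Finset.sum_sub_distrib]
      refine Finset.sum_congr rfl fun j _ => ?_
      simp only [newGen, if_pos h, Nat.cast_add, Nat.cast_mul, e1, e2]
      ring
    · simp [newGen, h]

/-- The pairs `(p, q)` with `f p > 0 > f q`, with coefficients `t p * t q / P`, sum to the part of
`∑ t i * v i` supported on `f i ≠ 0`. For `P = 0` the coefficients vanish by the convention
`P⁻¹ = 0`, and so does that part. -/
lemma sum_balance {ι : Type} [Fintype ι] (t v f : ι → ℝ) (ht : ∀ i, 0 ≤ t i)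
    (hf : ∑ i, t i * f i = 0) :
    ∑ i, t i * v i = ∑ i, t i * (if f i = 0 then v i else 0) +
      ∑ p, ∑ q, t p * t q * (∑ i, t i * max (f i) 0)⁻¹ *
        (if 0 < f p ∧ f q < 0 then f p * v q + -f q * v p else 0) := by
  set P := ∑ i, t i * max (f i) 0 with hP
  have hN : ∑ i, t i * max (-f i) 0 = P := by
    have h : P - ∑ i, t i * max (-f i) 0 = ∑ i, t i * f i := by
      rw [hP, ← Finset.sum_sub_distrib]
      refine Finset.sum_congr rfl fun i _ => ?_
      rcases le_total (f i) 0 with h | h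
      · rw [max_eq_left (by linarith : 0 ≤ -f i), max_eq_right h]; ring
      · rw [max_eq_right (by linarith : -f i ≤ 0), max_eq_left h]; ring
    linarith
  have key : ∑ p, ∑ q, t p * t q * P⁻¹ *
        (if 0 < f p ∧ f q < 0 then f p * v q + -f q * v p else 0) =
      P⁻¹ * ((∑ p, t p * max (f p) 0) * ∑ q, t q * (if f q < 0 then v q else 0) +
        (∑ p, t p * (if 0 < f p then v p else 0)) * ∑ q, t q * max (-f q) 0) := by
    rw [Finset.sum_mul_sum, Finset.sum_mul_sum, ← Finset.sum_add_distrib, Finset.mul_sum]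
    refine Finset.sum_congr rfl fun p _ => ?_
    rw [← Finset.sum_add_distrib, Finset.mul_sum]
    refine Finset.sum_congr rfl fun q _ => ?_
    by_cases h1 : 0 < f p <;> by_cases h2 : f q < 0
    · rw [max_eq_left h1.le, max_eq_left (by linarith : (0:ℝ) ≤ -f q)]
      simp only [h1, h2, and_self, if_true]; ring
    · rw [max_eq_right (by linarith : -f q ≤ 0)]
      simp [h2]
    · rw [max_eq_right (not_lt.1 h1)]
      simp [h1]
    · simp [h1, h2]
  have split : ∑ i, t i * v i = ∑ i, t i * (if f i = 0 then v i else 0) +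
      (∑ q, t q * (if f q < 0 then v q else 0) + ∑ p, t p * (if 0 < f p then v p else 0)) := by
    rw [← Finset.sum_add_distrib, ← Finset.sum_add_distrib]
    refine Finset.sum_congr rfl fun i _ => ?_
    rcases lt_trichotomy (f i) 0 with h | h | h
    · simp [h, h.ne, h.le]
    · simp [h]
    · simp [h, h.ne', h.le]
  rw [key, split, hN, ← hP]
  congr 1
  by_cases hP0 : P = 0
  · have z1 : ∀ i, t i * max (f i) 0 = 0 := fun i =>
      (Finset.sum_eq_zero_iff_of_nonneg
        (fun i _ => mul_nonneg (ht i) (le_max_right _ _))).1 (hP ▸ hP0) i (Finset.mem_univ i)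
    have z2 : ∀ i, t i * max (-f i) 0 = 0 := fun i =>
      (Finset.sum_eq_zero_iff_of_nonneg
        (fun i _ => mul_nonneg (ht i) (le_max_right _ _))).1 (hN.trans hP0) i (Finset.mem_univ i)
    rw [hP0, inv_zero, zero_mul, Finset.sum_eq_zero, Finset.sum_eq_zero, add_zero]
    · intro i _
      split_ifs with h
      · have := z1 i
        rw [max_eq_left h.le] at this
        simp [(mul_eq_zero.1 this).resolve_right h.ne']
      · simp
    · intro i _
      split_ifs with h
      · have := z2 i
        rw [max_eq_left (by linarith)] at this
        simp [(mul_eq_zero.1 this).resolve_right (by linarith)]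
      · simp
  · field_simp

lemma exists_generators_insert {m n : ℕ} (A : Matrix (Fin m) (Fin n) ℤ) (s : Finset (Fin m))
    (r : Fin m) {ι : Type} [Fintype ι] (V : ι → Fin n → ℕ) (hV : Generates A s V) :
    Generates A (insert r s) (newGen V fun l => ∑ j, A r j * (V l j : ℤ)) := by
  set f : ι → ℤ := fun l => ∑ j, A r j * (V l j : ℤ) with hf
  refine ⟨fun l i hi => ?_, fun x hx hA => ?_⟩
  · rcases Finset.mem_insert.1 hi with rfl | hi
    · exact newGen_solution V f (A i) (fun _ h => h) (fun p q => by simp only [hf]; ring) l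
    · exact newGen_solution V f (A i) (fun k _ => hV.1 k i hi)
        (fun p q => by rw [hV.1 p i hi, hV.1 q i hi]; ring) l
  · obtain ⟨t, ht, hxt⟩ := hV.2 x hx fun i hi => hA i (Finset.mem_insert_of_mem hi)
    have h0 : ∑ l, t l * (f l : ℝ) = 0 := by
      rw [← hA r (Finset.mem_insert_self r s)]
      simp only [hf, hxt, Int.cast_sum, Int.cast_mul, Int.cast_natCast, Finset.mul_sum]
      rw [Finset.sum_comm]
      exact Finset.sum_congr rfl fun j _ => Finset.sum_congr rfl fun l _ => by ring
    refine ⟨Sum.elim t fun pq => t pq.1 * t pq.2 * (∑ i, t i * max (f i : ℝ) 0)⁻¹, ?_, fun j => ?_⟩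
    · rintro (i | ⟨p, q⟩)
      · exact ht i
      · exact mul_nonneg (mul_nonneg (ht p) (ht q)) (inv_nonneg.2
          (Finset.sum_nonneg fun i _ => mul_nonneg (ht i) (le_max_right _ _)))
    · rw [hxt j, sum_balance t (fun l => (V l j : ℝ)) (fun l => (f l : ℝ)) ht h0,
        Fintype.sum_sum_type, Fintype.sum_prod_type]
      congr 1
      · refine Finset.sum_congr rfl fun i _ => ?_
        simp [newGen]
      · refine Finset.sum_congr rfl fun p _ => Finset.sum_congr rfl fun q _ => ?_
        simp only [Sum.elim_inr, newGen, Int.cast_pos, Int.cast_lt_zero]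
        split_ifs with h
        · have e1 : (((f p).toNat : ℕ) : ℝ) = f p := by
            exact_mod_cast Int.toNat_of_nonneg h.1.le
          have e2 : (((-f q).toNat : ℕ) : ℝ) = -f q := by
            exact_mod_cast Int.toNat_of_nonneg (by linarith [h.2] : 0 ≤ -f q)
          rw [Nat.cast_add, Nat.cast_mul, Nat.cast_mul, e1, e2]
        · simp

lemma exists_generators {m n : ℕ} (A : Matrix (Fin m) (Fin n) ℤ) (s : Finset (Fin m)) :
    ∃ (ι : Type) (_ : Fintype ι) (V : ι → Fin n → ℕ), Generates A s V := by
  induction s using Finset.induction_on with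
  | empty =>
    refine ⟨Fin n, inferInstance, fun l j => if j = l then 1 else 0, by simp, fun x hx _ => ?_⟩
    exact ⟨x, hx, fun i => by simp⟩
  | insert r s _ ih =>
    obtain ⟨ι, _, V, hV⟩ := ih
    exact ⟨_, inferInstance, _, exists_generators_insert A s r V hV⟩

/-- The cone of nonnegative real solutions of `A x = 0` is generated, with nonnegative
real coefficients, by finitely many integral solutions. -/
theorem cone_generated_by_integral_solutions (m n : ℕ) (A : Matrix (Fin m) (Fin n) ℤ) :
    ∃ (k : ℕ) (V : Fin k → Fin n → ℕ),
      (∀ l : Fin k, IsSolution A (V l)) ∧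
      ∀ x : Fin n → ℝ, (∀ i, 0 ≤ x i) → (∀ i : Fin m, ∑ j : Fin n, (A i j : ℝ) * x j = 0) →
        ∃ t : Fin k → ℝ, (∀ l, 0 ≤ t l) ∧ ∀ i : Fin n, x i = ∑ l : Fin k, t l * (V l i : ℝ) := by
  obtain ⟨ι, _, V, hV, hgen⟩ := exists_generators A Finset.univ
  let e := (Fintype.equivFin ι).symm
  refine ⟨Fintype.card ι, fun l => V (e l), fun l i => hV (e l) i (Finset.mem_univ i),
    fun x hx hA => ?_⟩
  obtain ⟨t, ht, hxt⟩ := hgen x hx fun i _ => hA i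
  exact ⟨fun l => t (e l), fun l => ht (e l), fun i =>
    (hxt i).trans (e.sum_comp fun l => t l * (V l i : ℝ)).symm⟩
end

section
/- Let m, n be natural numbers and let A be an m×n integer matrix. Let k be a natural number, let V 1, …, V k : Fin n → ℕ be solutions, let x : Fin n → ℕ be a solution, and let t 1, …, t k be nonnegative real numbers with x i = ∑_l t l · (V l) i for every i. If t l₀ ≥ 1 for some index l₀, then (V l₀) i ≤ x i for every i, and the componentwise difference x − V l₀ (as a vector in Fin n → ℕ) is again a solution. -/
/-- If an integral solution `x` is a nonnegative real combination of integral solutions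
`V l` in which some coefficient `t l₀` is at least `1`, then `V l₀ ≤ x` componentwise and
the componentwise difference `x - V l₀` is again a solution. -/
theorem splitting_off_generator (m n : ℕ) (A : Matrix (Fin m) (Fin n) ℤ)
    (k : ℕ) (V : Fin k → Fin n → ℕ) (hV : ∀ l, IsSolution A (V l))
    (x : Fin n → ℕ) (hx : IsSolution A x)
    (t : Fin k → ℝ) (ht : ∀ l, 0 ≤ t l)
    (hxt : ∀ i : Fin n, (x i : ℝ) = ∑ l : Fin k, t l * (V l i : ℝ))
    (l₀ : Fin k) (hl₀ : 1 ≤ t l₀) :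
    (∀ i : Fin n, V l₀ i ≤ x i) ∧ IsSolution A (fun i => x i - V l₀ i) := by
  have hle : ∀ i : Fin n, V l₀ i ≤ x i := by
    intro i
    have h : (V l₀ i : ℝ) ≤ x i := by
      rw [hxt i]
      calc (V l₀ i : ℝ) ≤ t l₀ * (V l₀ i : ℝ) :=
            le_mul_of_one_le_left (Nat.cast_nonneg _) hl₀
        _ ≤ ∑ l : Fin k, t l * (V l i : ℝ) :=
            Finset.single_le_sum (f := fun l => t l * (V l i : ℝ))
              (fun l _ => mul_nonneg (ht l) (Nat.cast_nonneg _)) (Finset.mem_univ l₀)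
    exact_mod_cast h
  refine ⟨hle, fun i => ?_⟩
  -- By `hle` the truncated subtraction is the subtraction of `ℤ`, so linearity of `A` applies.
  simp only [Nat.cast_sub (hle _), mul_sub, Finset.sum_sub_distrib, hx i, hV l₀ i, sub_self]
end

section
/- Let m, n be natural numbers and let A be an m×n integer matrix. Suppose k is a natural number and V 1, …, V k : Fin n → ℕ are solutions such that every x : Fin n → ℝ with x i ≥ 0 for all i and ∑_j A i j · x j = 0 for every i can be written as x i = ∑_l t l · (V l) i with all t l ≥ 0. Then every fundamental solution x : Fin n → ℕ admits such a representation with coefficients satisfying 0 ≤ t l ≤ 1 for all l. -/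
/-- If the integral solutions `V l` generate the cone of nonnegative real solutions with
nonnegative coefficients, then every fundamental solution is a combination of the `V l`
with coefficients in `[0, 1]`. -/
theorem fundamental_solutions_in_box (m n : ℕ) (A : Matrix (Fin m) (Fin n) ℤ)
    (k : ℕ) (V : Fin k → Fin n → ℕ) (hV : ∀ l, IsSolution A (V l))
    (hgen : ∀ x : Fin n → ℝ, (∀ i, 0 ≤ x i) →
      (∀ i : Fin m, ∑ j : Fin n, (A i j : ℝ) * x j = 0) →
      ∃ t : Fin k → ℝ, (∀ l, 0 ≤ t l) ∧ ∀ i : Fin n, x i = ∑ l : Fin k, t l * (V l i : ℝ))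
    (x : Fin n → ℕ) (hx : IsFundamental A x) :
    ∃ t : Fin k → ℝ, (∀ l, 0 ≤ t l ∧ t l ≤ 1) ∧
      ∀ i : Fin n, (x i : ℝ) = ∑ l : Fin k, t l * (V l i : ℝ) := by
  obtain ⟨hsol, -, hindec⟩ := hx
  obtain ⟨t, ht0, ht⟩ := hgen (fun j => (x j : ℝ)) (fun i => Nat.cast_nonneg _)
    (fun i => by exact_mod_cast hsol i)
  by_cases h : ∃ l, V l ≠ 0 ∧ 1 < t l
  · obtain ⟨l, hl0, hl⟩ := h
    have hle : ∀ i, V l i ≤ x i := by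
      intro i
      have h1 : t l * (V l i : ℝ) ≤ x i := by
        rw [ht i]
        exact Finset.single_le_sum (f := fun l => t l * (V l i : ℝ))
          (fun l _ => mul_nonneg (ht0 l) (Nat.cast_nonneg _)) (Finset.mem_univ l)
      have h2 : (V l i : ℝ) ≤ t l * V l i := le_mul_of_one_le_left (Nat.cast_nonneg _) hl.le
      exact_mod_cast h2.trans h1
    have hsub : IsSolution A (x - V l) := by
      intro i
      have h3 : ∀ j, A i j * (((x - V l) j : ℕ) : ℤ) = A i j * (x j : ℤ) - A i j * (V l j : ℤ) := by
        intro j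
        rw [Pi.sub_apply, Nat.cast_sub (hle j), mul_sub]
      simp only [h3, Finset.sum_sub_distrib, hsol i, hV l i, sub_zero]
    have hadd : x = V l + (x - V l) := by
      funext i
      exact (Nat.add_sub_of_le (hle i)).symm
    have hzero : x - V l = 0 := by
      by_contra hne
      exact hindec ⟨V l, x - V l, hl0, hne, hV l, hsub, hadd⟩
    rw [hzero, add_zero] at hadd
    refine ⟨fun l' => if l' = l then 1 else 0, fun l' => ?_, fun i => ?_⟩
    · dsimp only
      split_ifs <;> norm_num
    · simp [hadd]
  · push Not at h
    refine ⟨fun l => if V l = 0 then 0 else t l, fun l => ?_, fun i => ?_⟩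
    · dsimp only
      split_ifs with hl
      · norm_num
      · exact ⟨ht0 l, h l hl⟩
    · rw [ht i]
      refine Finset.sum_congr rfl fun l _ => ?_
      dsimp only
      split_ifs with hl
      · simp [hl]
      · rfl
end
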